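/- The generating function Σ_{n≥5} #F_n^2 · t^n equals 16t⁵(1 − 3t)/((1 − 2t)³(1 − 4t)²(1 − 6t)) as a formal power series identity. -/

import Mathlib

open scoped Classical

noncomputable def numKinks {n : ℕ} (π : Equiv.Perm (Fin n)) : ℕ :=
  (Finset.univ.filter (fun i : Fin n =>
    0 < (i : ℕ) ∧ ∀ j : Fin n, (j : ℕ) < (i : ℕ) →
      (π j : ℕ) + 1 ≠ (π i : ℕ) ∧ (π i : ℕ) + 1 ≠ (π j : ℕ))).card

noncomputable def F (n d : ℕ) : ℕ :=
  (Finset.univ.filter (fun π : Equiv.Perm (Fin n) => numKinks π = d)).card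

/-- insert value `p` at the last position -/
noncomputable def ins {n : ℕ} (p : Fin (n+1)) (π : Equiv.Perm (Fin n)) : Equiv.Perm (Fin (n+1)) :=
  (finSuccEquiv' (Fin.last n)).trans ((Equiv.optionCongr π).trans (finSuccEquiv' p).symm)

lemma ins_last {n : ℕ} (p : Fin (n+1)) (π : Equiv.Perm (Fin n)) : ins p π (Fin.last n) = p := by
  simp [ins]

lemma ins_castSucc {n : ℕ} (p : Fin (n+1)) (π : Equiv.Perm (Fin n)) (i : Fin n) :
    ins p π i.castSucc = p.succAbove (π i) := by
  have h : finSuccEquiv' (Fin.last n) i.castSucc = some i := by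
    rw [← Fin.succAbove_last_apply, finSuccEquiv'_succAbove]
  simp [ins, h]

lemma ins_bij (n : ℕ) : Function.Bijective
    (fun x : Fin (n+1) × Equiv.Perm (Fin n) => ins x.1 x.2) := by
  rw [Fintype.bijective_iff_injective_and_card]
  constructor
  · rintro ⟨p, π⟩ ⟨q, ρ⟩ h
    simp only at h
    have hp : p = q := by
      rw [← ins_last p π, h, ins_last]
    subst hp
    have : π = ρ := by
      ext i
      have := ins_castSucc p π i
      rw [h, ins_castSucc] at this
      rw [Fin.succAbove_right_injective this]
    rw [this]
  · simp [Fintype.card_perm, Nat.factorial_succ]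

noncomputable def sg {n : ℕ} (π : Equiv.Perm (Fin n)) (j : ℕ) : WithTop ℕ :=
  if h : 0 < j ∧ j - 1 < n then (((π.symm ⟨j-1, h.2⟩ : Fin n) : ℕ) : WithTop ℕ) else ⊤

lemma sg_succ {n : ℕ} (π : Equiv.Perm (Fin n)) (v : Fin n) :
    sg π (v+1) = ((π.symm v : ℕ) : WithTop ℕ) := by
  simp [sg]

lemma sg_zero {n : ℕ} (π : Equiv.Perm (Fin n)) : sg π 0 = ⊤ := by simp [sg]

lemma sg_big {n : ℕ} (π : Equiv.Perm (Fin n)) (j : ℕ) (h : n < j) : sg π j = ⊤ := by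
  unfold sg; rw [dif_neg]; omega

lemma sg_lt {n : ℕ} (π : Equiv.Perm (Fin n)) (j : ℕ) (h : 0 < j) (h' : j ≤ n) :
    sg π j < (n : WithTop ℕ) := by
  obtain ⟨j, rfl⟩ : ∃ k, j = k + 1 := ⟨j-1, by omega⟩
  rw [sg_succ π ⟨j, by omega⟩]
  exact_mod_cast Fin.is_lt _

lemma sg_ins_mid {n : ℕ} (p : Fin (n+1)) (π : Equiv.Perm (Fin n)) :
    sg (ins p π) (p+1) = (n : WithTop ℕ) := by
  rw [sg_succ]
  have : (ins p π).symm p = Fin.last n := by rw [Equiv.symm_apply_eq, ins_last]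
  rw [this]; simp

lemma ins_symm_succAbove {n : ℕ} (p : Fin (n+1)) (π : Equiv.Perm (Fin n)) (v : Fin n) :
    (ins p π).symm (p.succAbove v) = (π.symm v).castSucc := by
  rw [Equiv.symm_apply_eq, ins_castSucc]; simp

lemma sg_ins_le {n : ℕ} (p : Fin (n+1)) (π : Equiv.Perm (Fin n)) (j : ℕ) (h : j ≤ p) :
    sg (ins p π) j = sg π j := by
  rcases j with _ | j
  · simp [sg_zero]
  · have hj : j < n := by have := p.2; omega
    have h1 := ins_symm_succAbove p π ⟨j, hj⟩
    rw [Fin.succAbove_of_castSucc_lt _ _ (by rw [Fin.lt_def]; simpa using h)] at h1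
    have h2 := sg_succ (ins p π) (Fin.castSucc ⟨j, hj⟩)
    rw [h1] at h2
    have h3 := sg_succ π ⟨j, hj⟩
    simp only [Fin.val_castSucc] at h2 h3
    rw [h2, h3]

lemma sg_ins_gt {n : ℕ} (p : Fin (n+1)) (π : Equiv.Perm (Fin n)) (j : ℕ) (h : (p : ℕ) < j) :
    sg (ins p π) (j+1) = sg π j := by
  obtain ⟨j, rfl⟩ : ∃ k, j = k + 1 := ⟨j-1, by omega⟩
  by_cases hj : j < n
  · have h1 := ins_symm_succAbove p π ⟨j, hj⟩
    rw [Fin.succAbove_of_le_castSucc _ _ (by rw [Fin.le_def]; simp; omega)] at h1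
    have h2 := sg_succ (ins p π) (Fin.succ ⟨j, hj⟩)
    rw [h1] at h2
    have h3 := sg_succ π ⟨j, hj⟩
    simp only [Fin.val_castSucc, Fin.val_succ] at h2 h3
    rw [h2, h3]
  · rw [sg_big, sg_big] <;> omega

noncomputable def up {n : ℕ} (π : Equiv.Perm (Fin n)) (j : ℕ) : ℤ :=
  if sg π j < sg π (j+1) then 1 else 0

def val (b : ℕ → ℤ) (n : ℕ) : ℤ := ∑ v ∈ Finset.range n, (1 - b v) * b (v+1)

lemma up_zero {n : ℕ} (π : Equiv.Perm (Fin n)) : up π 0 = 0 := by simp [up, sg_zero]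

lemma up_n {n : ℕ} (hn : 0 < n) (π : Equiv.Perm (Fin n)) : up π n = 1 := by
  unfold up
  rw [if_pos]
  rw [sg_big π (n+1) (by omega)]
  exact lt_of_lt_of_le (sg_lt π n hn le_rfl) le_top

lemma up_01 {n : ℕ} (π : Equiv.Perm (Fin n)) (j : ℕ) : up π j = 0 ∨ up π j = 1 := by
  unfold up; split_ifs <;> simp

lemma up_ins_lt {n : ℕ} (p : Fin (n+1)) (π : Equiv.Perm (Fin n)) (j : ℕ) (h : j < p) :
    up (ins p π) j = up π j := by
  unfold up; rw [sg_ins_le _ _ _ (by omega), sg_ins_le _ _ _ (by omega)]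

lemma up_ins_gt {n : ℕ} (p : Fin (n+1)) (π : Equiv.Perm (Fin n)) (j : ℕ) (h : (p:ℕ) < j) :
    up (ins p π) (j+1) = up π j := by
  unfold up; rw [sg_ins_gt _ _ _ (by omega), sg_ins_gt _ _ _ (by omega)]

lemma up_ins_p {n : ℕ} (p : Fin (n+1)) (π : Equiv.Perm (Fin n)) (h : 0 < (p:ℕ)) :
    up (ins p π) p = 1 := by
  unfold up; rw [sg_ins_le _ _ _ le_rfl, sg_ins_mid, if_pos]
  exact sg_lt _ _ h (by omega)

lemma up_ins_p1 {n : ℕ} (p : Fin (n+1)) (π : Equiv.Perm (Fin n)) (h : (p:ℕ) < n) :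
    up (ins p π) (p+1) = 0 := by
  unfold up; rw [sg_ins_gt _ _ (p+1) (by omega), sg_ins_mid, if_neg]
  exact not_lt_of_gt (sg_lt _ _ (by omega) (by omega))

/-- increment -/
def inc (b : ℕ → ℤ) (n p : ℕ) : ℤ :=
  if 0 < p ∧ p < n then 1 - b (p-1) * (1 - b p) - b p * (1 - b (p+1)) else 0

lemma inc_01 (b : ℕ → ℤ) (hb : ∀ j, b j = 0 ∨ b j = 1) (n p : ℕ) :
    inc b n p = 0 ∨ inc b n p = 1 := by
  unfold inc
  split_ifs
  · rcases hb (p-1) with h | h <;> rcases hb p with h1 | h1 <;> rcases hb (p+1) with h2 | h2 <;>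
      simp [h, h1, h2]
  · simp

lemma val_ins {n : ℕ} (hn : 0 < n) (p : Fin (n+1)) (π : Equiv.Perm (Fin n)) :
    val (up (ins p π)) (n+1) = val (up π) n + inc (up π) n p := by
  have hp := p.2
  by_cases h0 : (p : ℕ) = 0
  · have e0 := up_zero (ins p π)
    have e0' := up_zero π
    have e1 := up_ins_p1 p π (by omega)
    rw [h0] at e1
    unfold inc val
    rw [if_neg (by omega)]
    rcases n with _ | m
    · omega
    rw [Finset.sum_range_succ', Finset.sum_range_succ', Finset.sum_range_succ' _ m]
    have : ∀ i ∈ Finset.range m, (1 - up (ins p π) (i+1+1)) * up (ins p π) (i+1+1+1)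
        = (1 - up π (i+1)) * up π (i+1+1) := by
      intro i _
      rw [up_ins_gt _ _ _ (by omega), up_ins_gt _ _ _ (by omega)]
    rw [Finset.sum_congr rfl this]
    have e2 := up_ins_gt p π (0+1) (by omega)
    simp only [zero_add] at *
    rw [e0, e0', e1, e2]; ring
  by_cases h1 : (p : ℕ) = n
  · have e1 := up_n (by omega) (ins p π)
    have e2 := up_ins_p p π (by omega)
    have e3 := up_n hn π
    unfold inc val
    rw [if_neg (by omega), Finset.sum_range_succ]
    rw [h1] at e2
    rw [e1, e2]
    have key : ∀ j ≤ n, up (ins p π) j = up π j := by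
      intro j hj
      rcases hj.lt_or_eq with h | rfl
      · exact up_ins_lt _ _ _ (by omega)
      · rw [e2, e3]
    have : ∀ i ∈ Finset.range n, (1 - up (ins p π) i) * up (ins p π) (i+1)
        = (1 - up π i) * up π (i+1) := by
      intro i hi
      rw [Finset.mem_range] at hi
      rw [key _ (by omega), key _ (by omega)]
    rw [Finset.sum_congr rfl this]; ring
  obtain ⟨q, hq⟩ : ∃ q, (p : ℕ) = q + 1 := ⟨p-1, by omega⟩
  obtain ⟨r, hr⟩ : ∃ r, n = q + (r + 2) := ⟨n - q - 2, by omega⟩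
  have hr' : n + 1 = q + (r + 3) := by omega
  have a0 := up_ins_lt p π q (by omega)
  have a1 := up_ins_p p π (by omega)
  have a2 := up_ins_p1 p π (by omega)
  have a3 := up_ins_gt p π (q+2) (by omega)
  rw [hq] at a1 a2
  unfold inc val
  have hL : ∀ f : ℕ → ℤ, ∑ v ∈ Finset.range (n+1), f v
    = ∑ v ∈ Finset.range (q + (r+3)), f v := by intro f; rw [hr']
  rw [if_pos (by omega), hL, hq]
  have hR : ∑ v ∈ Finset.range n, (1 - up π v) * up π (v+1)
    = ∑ v ∈ Finset.range (q + (r+2)), (1 - up π v) * up π (v+1) := by rw [← hr]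
  rw [hR, Finset.sum_range_add _ q (r+3), Finset.sum_range_add _ q (r+2)]
  have s1 : ∀ i ∈ Finset.range q, (1 - up (ins p π) i) * up (ins p π) (i+1)
        = (1 - up π i) * up π (i+1) := by
    intro i hi
    rw [Finset.mem_range] at hi
    rw [up_ins_lt _ _ _ (by omega), up_ins_lt _ _ _ (by omega)]
  rw [Finset.sum_congr rfl s1]
  rw [show r + 3 = r + 1 + 1 + 1 from rfl, show r + 2 = r + 1 + 1 from rfl]
  rw [Finset.sum_range_succ' _ (r+1+1), Finset.sum_range_succ' _ (r+1),
    Finset.sum_range_succ' _ r, Finset.sum_range_succ' _ (r+1), Finset.sum_range_succ' _ r]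
  have s2 : ∀ i ∈ Finset.range r,
      (1 - up (ins p π) (q + (i+1+1+1))) * up (ins p π) (q+(i+1+1+1)+1)
        = (1 - up π (q + (i+1+1))) * up π (q+(i+1+1)+1) := by
    intro i hi
    have := up_ins_gt p π (q + (i+1+1)) (by omega)
    have h' := up_ins_gt p π (q + (i+1+1)+1) (by omega)
    rw [← this, ← h']
    rfl
  rw [Finset.sum_congr rfl s2]
  simp only [zero_add, add_zero, ← add_assoc, Nat.add_sub_cancel] at *
  norm_num [add_assoc] at *
  rw [a0, a1, a2, a3]
  ring

lemma sum_inc (b : ℕ → ℤ) (n : ℕ) (hn : 0 < n) (h0 : b 0 = 0) (h1 : b n = 1) :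
    ∑ p ∈ Finset.range (n+1), inc b n p = n + 1 - 2 * val b n := by
  obtain ⟨m, rfl⟩ : ∃ m, n = m + 1 := ⟨n-1, by omega⟩
  have hp : val b (m+1) = 1 + ∑ v ∈ Finset.range (m+1), b v * (1 - b (v+1)) := by
    have := Finset.sum_range_sub b (m+1)
    rw [h0, h1] at this
    unfold val
    rw [sub_zero] at this
    refine Eq.trans ?_ (congrArg (· + _) this)
    rw [← Finset.sum_add_distrib]
    apply Finset.sum_congr rfl
    intros; ring
  rw [Finset.sum_range_succ, Finset.sum_range_succ']
  have : ∀ p ∈ Finset.range m, inc b (m+1) (p+1) =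
      1 - b p * (1 - b (p+1)) - b (p+1) * (1 - b (p+1+1)) := by
    intro p hp
    rw [Finset.mem_range] at hp
    unfold inc; rw [if_pos (by omega)]; simp
  rw [Finset.sum_congr rfl this, Finset.sum_sub_distrib, Finset.sum_sub_distrib]
  have e1 : inc b (m+1) 0 = 0 := by simp [inc]
  have e2 : inc b (m+1) (m+1) = 0 := by simp [inc]
  have f1 := Finset.sum_range_succ (fun v => b v * (1 - b (v+1))) m
  have f2 := Finset.sum_range_succ' (fun v => b v * (1 - b (v+1))) m
  simp only [h0, h1] at f1 f2
  rw [e1, e2, hp]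
  simp only [Finset.sum_const, Finset.card_range]
  push_cast
  simp only [nsmul_eq_mul]
  linarith

lemma kinks_val {n : ℕ} (hn : 0 < n) (π : Equiv.Perm (Fin n)) :
    (numKinks π : ℤ) + 1 = val (up π) n := by
  have h1 : numKinks π + 1 = (Finset.univ.filter (fun i : Fin n =>
    ∀ j : Fin n, (j : ℕ) < (i : ℕ) →
      (π j : ℕ) + 1 ≠ (π i : ℕ) ∧ (π i : ℕ) + 1 ≠ (π j : ℕ))).card := by
    unfold numKinks
    rw [← Finset.card_insert_of_notMem (a := (⟨0, hn⟩ : Fin n)) (by simp)]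
    congr 1
    ext i
    simp only [Finset.mem_insert, Finset.mem_filter, Finset.mem_univ, true_and]
    constructor
    · rintro (rfl | h)
      · intro j hj; simp at hj
      · exact h.2
    · intro h
      by_cases hi : (i : ℕ) = 0
      · left; ext; exact hi
      · right; exact ⟨by omega, h⟩
  have h2 : val (up π) n = ∑ v : Fin n, (1 - up π v) * up π (v+1) := by
    unfold val; rw [Finset.sum_range]
  rw [h2, ← Equiv.sum_comp π]
  have h3 : ((numKinks π + 1 : ℕ) : ℤ) = (numKinks π : ℤ) + 1 := by push_cast; rfl
  rw [← h3, h1, Finset.card_filter]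
  push_cast
  apply Finset.sum_congr rfl
  intro i _
  have hs : sg π ((π i : ℕ) + 1) = ((i : ℕ) : WithTop ℕ) := by
    rw [sg_succ]; simp
  -- left comparison
  have hl : sg π (π i) < sg π ((π i : ℕ)+1) ↔ ∃ j : Fin n, (j:ℕ) < i ∧ (π j : ℕ) + 1 = π i := by
    rw [hs]
    constructor
    · intro h
      have h0 : (π i : ℕ) ≠ 0 := by
        intro h0; rw [h0, sg_zero] at h; simp at h
      have hlt : (π i : ℕ) - 1 < n := by have := (π i).2; omega
      refine ⟨π.symm ⟨(π i : ℕ) - 1, hlt⟩, ?_, by simp; omega⟩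
      have := sg_succ π ⟨(π i : ℕ) - 1, hlt⟩
      simp only at this
      rw [Nat.sub_add_cancel (by omega)] at this
      rw [this] at h
      exact_mod_cast h
    · rintro ⟨j, hj, he⟩
      rw [← he, sg_succ]
      simp only [Equiv.symm_apply_apply]
      exact_mod_cast hj
  have hr : sg π ((π i : ℕ)+1) < sg π ((π i : ℕ)+1+1) ↔
      ¬ ∃ j : Fin n, (j:ℕ) < i ∧ (π i : ℕ) + 1 = π j := by
    rw [hs]
    constructor
    · rintro h ⟨j, hj, he⟩
      rw [he, sg_succ] at h
      simp only [Equiv.symm_apply_apply] at h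
      have : (i:ℕ) < j := by exact_mod_cast h
      omega
    · intro h
      by_cases hlt : (π i : ℕ) + 1 < n
      · have := sg_succ π ⟨(π i : ℕ) + 1, hlt⟩
        simp only at this
        rw [this]
        by_contra hc
        apply h
        refine ⟨π.symm ⟨(π i : ℕ) + 1, hlt⟩, ?_, by simp⟩
        have hle : ((π.symm ⟨(π i : ℕ) + 1, hlt⟩ : Fin n) : ℕ) ≤ i := by
          rw [not_lt] at hc
          exact_mod_cast hc
        refine lt_of_le_of_ne hle ?_
        intro he
        have he' := Fin.ext he
        rw [Equiv.symm_apply_eq] at he'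
        have := congrArg Fin.val he'
        simp at this
      · rw [sg_big _ _ (by omega)]
        exact WithTop.coe_lt_top _
  have key : (∀ j : Fin n, (j : ℕ) < (i : ℕ) →
      (π j : ℕ) + 1 ≠ (π i : ℕ) ∧ (π i : ℕ) + 1 ≠ (π j : ℕ)) ↔
      ¬ (sg π (π i) < sg π ((π i : ℕ)+1)) ∧ sg π ((π i : ℕ)+1) < sg π ((π i : ℕ)+1+1) := by
    rw [hl, hr]
    push Not
    constructor
    · intro h; exact ⟨fun j hj => (h j hj).1, fun j hj => (h j hj).2⟩
    · rintro ⟨h, h'⟩ j hj; exact ⟨h j hj, h' j hj⟩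
  rw [if_congr key rfl rfl]
  unfold up
  by_cases c1 : sg π (π i) < sg π ((π i : ℕ)+1) <;>
  by_cases c2 : sg π ((π i : ℕ)+1) < sg π ((π i : ℕ)+1+1) <;>
  simp [c1, c2]

lemma F_eq_sum (n d : ℕ) : (F n d : ℤ) =
    ∑ π : Equiv.Perm (Fin n), if (numKinks π : ℤ) = d then 1 else 0 := by
  unfold F; rw [Finset.card_filter]; push_cast
  simp only [Nat.cast_inj]

lemma F_rec (n d : ℕ) (hn : 0 < n) : (F (n+1) (d+1) : ℤ) =
    (2 * d + 4) * F n (d+1) + (n - 1 - 2 * d) * F n d ∧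
    (F (n+1) 0 : ℤ) = 2 * F n 0 := by
  have main : ∀ e : ℤ, (∑ π : Equiv.Perm (Fin (n+1)), if (numKinks π : ℤ) = e then (1:ℤ) else 0) =
      (2 * e + 2) * (∑ π : Equiv.Perm (Fin n), if (numKinks π : ℤ) = e then (1:ℤ) else 0) +
      (n + 1 - 2 * e) * (∑ π : Equiv.Perm (Fin n), if (numKinks π : ℤ) = e - 1 then (1:ℤ) else 0) := by
    intro e
    rw [← Function.Bijective.sum_comp (ins_bij n), Fintype.sum_prod_type_right, Finset.mul_sum,
      Finset.mul_sum, ← Finset.sum_add_distrib]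
    apply Finset.sum_congr rfl
    intro π _
    have hk : ∀ p : Fin (n+1), (numKinks (ins p π) : ℤ) = numKinks π + inc (up π) n p := by
      intro p
      have h1 := kinks_val (by omega) (ins p π)
      have h2 := kinks_val hn π
      have h3 := val_ins hn p π
      linarith
    have hs := sum_inc (up π) n hn (up_zero π) (up_n hn π)
    rw [← kinks_val hn π, Finset.sum_range] at hs
    generalize hK : (numKinks π : ℤ) = K at *
    have hterm : ∀ p : Fin (n+1), (if (numKinks (ins p π) : ℤ) = e then (1:ℤ) else 0) =
        (1 - inc (up π) n p) * (if K = e then 1 else 0) +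
        inc (up π) n p * (if K = e - 1 then 1 else 0) := by
      intro p
      rw [hk p]
      rcases inc_01 (up π) (up_01 π) n p with h | h
      · simp [h]
      · simp [h, eq_sub_iff_add_eq]
    simp only [hterm]
    rw [Finset.sum_add_distrib, ← Finset.sum_mul, ← Finset.sum_mul, Finset.sum_sub_distrib, hs]
    simp only [Finset.sum_const, Finset.card_univ, Fintype.card_fin]
    simp only [nsmul_eq_mul]
    push_cast
    split_ifs with a b b
    · omega
    · subst a; ring
    · rw [b]; ring
    · ring
  constructor
  · have := main (d+1)
    rw [add_sub_cancel_right] at this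
    rw [F_eq_sum, F_eq_sum, F_eq_sum]
    push_cast
    rw [this]; ring
  · have := main 0
    have hz : ∀ π : Equiv.Perm (Fin n), ¬ ((numKinks π : ℤ) = 0 - 1) := by intro π; omega
    simp only [hz, if_false] at this
    rw [F_eq_sum, F_eq_sum]
    push_cast
    rw [this]; simp

lemma F_one (d : ℕ) : F 1 d = if d = 0 then 1 else 0 := by
  have : ∀ π : Equiv.Perm (Fin 1), numKinks π = 0 := by
    intro π; unfold numKinks; simp
  unfold F
  simp only [this]
  split_ifs with h
  · subst h; simp
  · rw [Finset.card_eq_zero, Finset.filter_eq_empty_iff]; intro _ _; omega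


lemma F_closed (m : ℕ) : (F (m+1) 0 : ℚ) = 2 ^ m ∧
    (F (m+1) 1 : ℚ) = 4 ^ m / 2 - (m+1) * 2 ^ m / 2 ∧
    (F (m+1) 2 : ℚ) = 6 ^ (m+1) / 32 - m * 4 ^ (m+1) / 16
      + (2 * (m+1) ^ 2 - 4 * (m+1) - 1) * 2 ^ (m+1) / 32 := by
  induction m with
  | zero => simp [F_one]; norm_num
  | succ m ih =>
    obtain ⟨i0, i1, i2⟩ := ih
    have r0 := (F_rec (m+1) 0 (by omega)).2
    have r1 := (F_rec (m+1) 0 (by omega)).1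
    have r2 := (F_rec (m+1) 1 (by omega)).1
    have r0 : (F (m+1+1) 0 : ℚ) = 2 * F (m+1) 0 := by exact_mod_cast r0
    have r1 : (F (m+1+1) 1 : ℚ) = 4 * F (m+1) 1 + m * F (m+1) 0 := by
      push_cast at r1
      have : (F (m+1+1) 1 : ℤ) = 4 * F (m+1) 1 + m * F (m+1) 0 := by rw [r1]; ring
      exact_mod_cast this
    have r2 : (F (m+1+1) 2 : ℚ) = 6 * F (m+1) 2 + (m - 2) * F (m+1) 1 := by
      push_cast at r2
      have : (F (m+1+1) 2 : ℤ) = 6 * F (m+1) 2 + (m - 2) * F (m+1) 1 := by rw [r2]; ring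
      exact_mod_cast this
    refine ⟨?_, ?_, ?_⟩
    · rw [r0, i0]; ring
    · rw [r1, i1, i0]; push_cast; ring
    · rw [r2, i2, i1]; push_cast
      have h4 : (4:ℚ) ^ m = 2 ^ m * 2 ^ m := by rw [← mul_pow]; norm_num
      ring

theorem gf_two_kinks :
    (PowerSeries.mk fun n => if 5 ≤ n then (F n 2 : ℚ) else 0)
        * ((1 - 2 * PowerSeries.X) ^ 3 * (1 - 4 * PowerSeries.X) ^ 2
            * (1 - 6 * PowerSeries.X))
      = 16 * PowerSeries.X ^ 5 * (1 - 3 * PowerSeries.X) := by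
  have hS : (PowerSeries.mk fun n => if 5 ≤ n then (F n 2 : ℚ) else 0) =
      PowerSeries.X * PowerSeries.mk (fun m : ℕ => (6 ^ (m+1) / 32 - m * 4 ^ (m+1) / 16
      + (2 * (m+1) ^ 2 - 4 * (m+1) - 1) * 2 ^ (m+1) / 32 : ℚ)) := by
    ext n
    rcases n with _ | m
    · simp
    · rw [PowerSeries.coeff_succ_X_mul, PowerSeries.coeff_mk, PowerSeries.coeff_mk,
        ← (F_closed m).2.2]
      split_ifs with h
      · rfl
      · have : m < 4 := by omega
        rw [(F_closed m).2.2]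
        interval_cases m <;> norm_num
  rw [hS]
  generalize hg : (fun m : ℕ => (6 ^ (m+1) / 32 - m * 4 ^ (m+1) / 16
      + (2 * (m+1) ^ 2 - 4 * (m+1) - 1) * 2 ^ (m+1) / 32 : ℚ)) = g
  have hv : ∀ m : ℕ, g m = 6 ^ (m+1) / 32 - m * 4 ^ (m+1) / 16
      + (2 * (m+1) ^ 2 - 4 * (m+1) - 1) * 2 ^ (m+1) / 32 := by intro m; rw [← hg]
  have key : PowerSeries.mk g * (1 - PowerSeries.C 20 * PowerSeries.X
      + PowerSeries.C 160 * PowerSeries.X ^ 2 - PowerSeries.C 656 * PowerSeries.X ^ 3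
      + PowerSeries.C 1456 * PowerSeries.X ^ 4 - PowerSeries.C 1664 * PowerSeries.X ^ 5
      + PowerSeries.C 768 * PowerSeries.X ^ 6) =
      PowerSeries.C 16 * PowerSeries.X ^ 4 - PowerSeries.C 48 * PowerSeries.X ^ 5 := by
    have e : ∀ (c : ℚ) (k : ℕ), PowerSeries.mk g * (PowerSeries.C c * PowerSeries.X ^ k)
        = PowerSeries.C c * (PowerSeries.mk g * PowerSeries.X ^ k) := by intros; ring
    have e1 := e 20 1
    rw [pow_one] at e1
    ext n
    simp only [mul_add, mul_sub, e, e1, mul_one, map_add, map_sub, PowerSeries.coeff_C_mul,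
      PowerSeries.coeff_mul_X_pow', PowerSeries.coeff_mk, PowerSeries.coeff_C]
    rw [← pow_one (PowerSeries.X : PowerSeries ℚ), PowerSeries.coeff_mul_X_pow']
    simp only [PowerSeries.coeff_mk]
    by_cases hn : n < 6
    · interval_cases n <;> norm_num [hv]
    · obtain ⟨m, rfl⟩ : ∃ m, n = m + 6 := ⟨n - 6, by omega⟩
      rw [if_pos (by omega), if_pos (by omega), if_pos (by omega), if_pos (by omega),
        if_pos (by omega), if_pos (by omega), if_pos (by omega), if_neg (by omega),
        if_pos (by omega), if_neg (by omega)]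
      rw [show m + 6 - 1 = m + 5 by omega, show m + 6 - 2 = m + 4 by omega,
        show m + 6 - 3 = m + 3 by omega, show m + 6 - 4 = m + 2 by omega,
        show m + 6 - 5 = m + 1 by omega, show m + 6 - 6 = m by omega]
      simp only [hv]
      push_cast
      ring
  simp only [map_ofNat] at key
  linear_combination PowerSeries.X * key
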